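/- A DMRL random variable is smaller in the convex order than the exponential random variable with the same mean: If Y is a positive integrable random variable with the DMRL property and Y^e is exponentially distributed with E[Y^e] = E[Y], then E[φ(Y)] ≤ E[φ(Y^e)] for every convex function φ : ℝ → ℝ for which both expectations are finite. -/

import Mathlib

open MeasureTheory ProbabilityTheory

/-- Mean residual life of a random variable `X` at time `t`: `E[X − t | X > t]`. -/
noncomputable def mrl {Ω : Type*} [MeasurableSpace Ω] (P : Measure Ω) (X : Ω → ℝ) (t : ℝ) : ℝ :=
  (∫ ω in {ω | t < X ω}, (X ω - t) ∂P) / (P {ω | t < X ω}).toReal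

/-!
For a random variable `X` let `π_X(a) = E[(X - a)⁺]` be its stop-loss transform.

A convex function differs from a tangent line by a positive mixture, against its second derivative
measure, of the functions `x ↦ (x - s)⁺` and `x ↦ (s - x)⁺ = (x - s)⁺ - (x - s)`. By Tonelli, an
inequality `π_U ≤ π_V` between variables of equal mean therefore extends from the stop-loss
transforms to the expectations of all convex functions.

Comparing the ages `0` and `t` in the DMRL property gives `E[Y - t | Y > t] ≤ E[Y] = 1 / r`, that
is, `r π_Y(t) ≤ P(Y > t)`. Since `-P(Y > t)` is the right derivative of `π_Y`, Grönwall's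
inequality gives `π_Y(t) ≤ exp(-r t) / r`, and the right-hand side is the stop-loss transform of
the exponential distribution.
-/

open Set Filter
open scoped ENNReal Interval Topology

section ConvexRepresentation

variable {φ : ℝ → ℝ} {a : ℝ}

/-- The hinge function `x ↦ (x - s)⁺` or `x ↦ (s - x)⁺`, whichever vanishes at the base point `a`.
Convex functions are, up to an affine function, mixtures of hinges over `s`. -/
noncomputable def hinge (a s x : ℝ) : ℝ≥0∞ :=
  if a < s then ENNReal.ofReal (x - s) else ENNReal.ofReal (s - x)

lemma measurable_hinge : Measurable fun p : ℝ × ℝ ↦ hinge a p.2 p.1 :=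
  Measurable.ite (measurableSet_lt measurable_const measurable_snd) (by fun_prop) (by fun_prop)

lemma volume_setOf_mem_uIoc_eq_hinge (a s x : ℝ) :
    volume {t | t ∈ Ι a x ∧ s ∈ Ι a t} = hinge a s x := by
  by_cases has : a < s
  · have : {t | t ∈ Ι a x ∧ s ∈ Ι a t} = Icc s x := by
      ext t
      simp only [mem_ofPred_eq, mem_uIoc, mem_Icc]
      grind
    rw [this, Real.volume_Icc, hinge, if_pos has]
  · have : {t | t ∈ Ι a x ∧ s ∈ Ι a t} = Ioo x s := by
      ext t
      simp only [mem_ofPred_eq, mem_uIoc, mem_Ioo]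
      grind
    rw [this, Real.volume_Ioo, hinge, if_neg has]

lemma lintegral_hinge (μ : Measure ℝ) [SFinite μ] (a x : ℝ) :
    ∫⁻ s, hinge a s x ∂μ = ∫⁻ t in Ι a x, μ (Ι a t) := by
  let A : Set (ℝ × ℝ) := {p | p.2 ∈ Ι a x ∧ p.1 ∈ Ι a p.2}
  have hA : MeasurableSet A := by
    simp only [A, mem_uIoc]
    measurability
  calc ∫⁻ s, hinge a s x ∂μ
      = ∫⁻ s, volume (Prod.mk s ⁻¹' A) ∂μ :=
        lintegral_congr fun s ↦ (volume_setOf_mem_uIoc_eq_hinge a s x).symm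
    _ = ∫⁻ t, μ ((fun s ↦ (s, t)) ⁻¹' A) := by
        rw [← Measure.prod_apply hA, Measure.prod_apply_symm hA]
    _ = ∫⁻ t in Ι a x, μ (Ι a t) := by
        rw [← lintegral_indicator measurableSet_uIoc]
        refine lintegral_congr fun t ↦ ?_
        by_cases ht : t ∈ Ι a x <;> simp [A, ht]

lemma convexOn_continuous (hφ : ConvexOn ℝ univ φ) : Continuous φ := by
  simpa only [interior_univ, continuousOn_univ] using hφ.continuousOn_interior

lemma convexOn_monotone_rightDeriv (hφ : ConvexOn ℝ univ φ) :
    Monotone fun t ↦ derivWithin φ (Ioi t) t := by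
  simpa only [interior_univ, monotoneOn_univ] using hφ.monotoneOn_rightDeriv

lemma convexOn_integral_rightDeriv (hφ : ConvexOn ℝ univ φ) (a x : ℝ) :
    ∫ t in a..x, derivWithin φ (Ioi t) t = φ x - φ a := by
  refine intervalIntegral.integral_eq_sub_of_hasDeriv_right (convexOn_continuous hφ).continuousOn ?_
    (convexOn_monotone_rightDeriv hφ).intervalIntegrable
  exact fun t _ ↦ hφ.hasDerivWithinAt_rightDeriv_of_mem_interior (by simp)

lemma monotone_ae_eq_stieltjesFunction {f : ℝ → ℝ} (hf : Monotone f) :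
    f =ᵐ[volume] hf.stieltjesFunction := by
  filter_upwards [hf.countable_not_continuousAt.ae_notMem volume] with t ht
  rw [hf.stieltjesFunction_eq]
  exact (not_not.mp ht).continuousWithinAt.rightLim_eq.symm

lemma stieltjesFunction_measure_uIoc (g : StieltjesFunction ℝ) (a t : ℝ) :
    g.measure (Ι a t) = ENNReal.ofReal |g t - g a| := by
  rcases le_total a t with h | h
  · rw [uIoc_of_le h, g.measure_Ioc, abs_of_nonneg (sub_nonneg.mpr (g.mono h))]
  · rw [uIoc_of_ge h, g.measure_Ioc, abs_sub_comm, abs_of_nonneg (sub_nonneg.mpr (g.mono h))]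

lemma monotone_integral_sub_eq_integral_abs {f : ℝ → ℝ} (hf : Monotone f) (a x : ℝ) :
    ∫ t in a..x, (f t - f a) = ∫ t in Ι a x, |f t - f a| := by
  rcases le_total a x with h | h
  · rw [uIoc_of_le h, intervalIntegral.integral_of_le h]
    exact setIntegral_congr_fun measurableSet_Ioc fun t ht ↦
      (abs_of_nonneg (sub_nonneg.mpr (hf ht.1.le))).symm
  · rw [uIoc_of_ge h, intervalIntegral.integral_of_ge h, ← integral_neg]
    exact setIntegral_congr_fun measurableSet_Ioc fun t ht ↦
      (abs_of_nonpos (sub_nonpos.mpr (hf ht.2))).symm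

lemma convexOn_exists_lintegral_hinge_eq (hφ : ConvexOn ℝ univ φ) (a : ℝ) :
    ∃ (c : ℝ) (μ : Measure ℝ), SFinite μ ∧ ∀ x, 0 ≤ φ x - φ a - c * (x - a) ∧
      ∫⁻ s, hinge a s x ∂μ = ENNReal.ofReal (φ x - φ a - c * (x - a)) := by
  have hmono := convexOn_monotone_rightDeriv hφ
  let g := hmono.stieltjesFunction
  have htaylor (x : ℝ) : ∫ t in a..x, (g t - g a) = φ x - φ a - g a * (x - a) := by
    rw [intervalIntegral.integral_sub g.mono.intervalIntegrable (by simp),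
      intervalIntegral.integral_const, smul_eq_mul, mul_comm, ← convexOn_integral_rightDeriv hφ a x,
      intervalIntegral.integral_congr_ae
        ((monotone_ae_eq_stieltjesFunction hmono).mono fun _ h _ ↦ h)]
  refine ⟨g a, g.measure, inferInstance, fun x ↦ ?_⟩
  have hnonneg : 0 ≤ᵐ[volume.restrict (Ι a x)] fun t ↦ |g t - g a| :=
    .of_forall fun _ ↦ abs_nonneg _
  have habs : IntegrableOn (fun t ↦ |g t - g a|) (Ι a x) :=
    intervalIntegrable_iff.mp (g.mono.intervalIntegrable.sub (by simp)).abs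
  rw [← htaylor, monotone_integral_sub_eq_integral_abs g.mono, lintegral_hinge,
    ofReal_integral_eq_lintegral_ofReal habs hnonneg]
  exact ⟨integral_nonneg_of_ae hnonneg,
    lintegral_congr fun t ↦ stieltjesFunction_measure_uIoc g a t⟩

end ConvexRepresentation

section StopLoss

variable {Ω : Type*} [MeasurableSpace Ω] {P : Measure Ω} {X : Ω → ℝ} {s t : ℝ}

/-- The stop-loss transform `a ↦ E[(X - a)⁺]` of a random variable `X`. -/
noncomputable def stopLoss (P : Measure Ω) (X : Ω → ℝ) (a : ℝ) : ℝ :=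
  ∫ ω, max (X ω - a) 0 ∂P

lemma integrable_max_sub_zero [IsFiniteMeasure P] (hX : Integrable X P) (a : ℝ) :
    Integrable (fun ω ↦ max (X ω - a) 0) P :=
  (hX.sub (integrable_const a)).pos_part

lemma ofReal_stopLoss [IsFiniteMeasure P] (hX : Integrable X P) (a : ℝ) :
    ENNReal.ofReal (stopLoss P X a) = ∫⁻ ω, ENNReal.ofReal (X ω - a) ∂P := by
  rw [stopLoss, ofReal_integral_eq_lintegral_ofReal (integrable_max_sub_zero hX a)
    (.of_forall fun _ ↦ le_max_right _ _)]
  simp [ENNReal.ofReal_max]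

lemma integral_sub_le_stopLoss [IsProbabilityMeasure P] (hX : Integrable X P) (a : ℝ) :
    ∫ ω, X ω ∂P - a ≤ stopLoss P X a := by
  calc ∫ ω, X ω ∂P - a = ∫ ω, (X ω - a) ∂P := by simp [integral_sub hX (integrable_const a)]
    _ ≤ stopLoss P X a :=
      integral_mono (hX.sub (integrable_const a)) (integrable_max_sub_zero hX a)
        fun _ ↦ le_max_left _ _

lemma integral_max_const_sub_zero [IsProbabilityMeasure P] (hX : Integrable X P) (a : ℝ) :
    ∫ ω, max (a - X ω) 0 ∂P = stopLoss P X a + a - ∫ ω, X ω ∂P := by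
  have hparity (x : ℝ) : max (a - x) 0 = max (x - a) 0 - (x - a) := by
    grind
  calc ∫ ω, max (a - X ω) 0 ∂P = ∫ ω, (max (X ω - a) 0 - (X ω - a)) ∂P := by
        simp only [hparity]
    _ = stopLoss P X a - (∫ ω, X ω ∂P - a) := by
        rw [integral_sub (integrable_max_sub_zero hX a) (by fun_prop),
          integral_sub hX (integrable_const a), stopLoss]
        simp
    _ = stopLoss P X a + a - ∫ ω, X ω ∂P := by ring

lemma stopLoss_le_add [IsProbabilityMeasure P] (hX : Integrable X P) (s t : ℝ) :
    stopLoss P X s ≤ stopLoss P X t + |s - t| := by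
  calc stopLoss P X s ≤ ∫ ω, (max (X ω - t) 0 + |s - t|) ∂P := by
        refine integral_mono (integrable_max_sub_zero hX s)
          ((integrable_max_sub_zero hX t).add (integrable_const _)) fun ω ↦ ?_
        grind
    _ = stopLoss P X t + |s - t| := by
        simp [integral_add (integrable_max_sub_zero hX t) (integrable_const _), stopLoss]

lemma continuous_stopLoss [IsProbabilityMeasure P] (hX : Integrable X P) :
    Continuous (stopLoss P X) :=
  (LipschitzWith.of_le_add (stopLoss_le_add hX)).continuous

lemma nullMeasurableSet_tail (hX : AEMeasurable X P) (t : ℝ) :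
    NullMeasurableSet {ω | t < X ω} P :=
  nullMeasurableSet_lt aemeasurable_const hX

lemma sub_mul_measureReal_le_stopLoss_sub [IsFiniteMeasure P] (hX : Integrable X P)
    (hst : s ≤ t) :
    (t - s) * P.real {ω | t < X ω} ≤ stopLoss P X s - stopLoss P X t := by
  have hmeas := nullMeasurableSet_tail hX.aemeasurable t
  calc (t - s) * P.real {ω | t < X ω}
      = ∫ ω, {ω | t < X ω}.indicator (fun _ ↦ t - s) ω ∂P := by
        rw [integral_indicator₀ hmeas, setIntegral_const, smul_eq_mul, mul_comm]
    _ ≤ ∫ ω, (max (X ω - s) 0 - max (X ω - t) 0) ∂P := by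
        refine integral_mono ((integrable_const _).indicator₀ hmeas)
          ((integrable_max_sub_zero hX s).sub (integrable_max_sub_zero hX t)) fun ω ↦ ?_
        simp only [indicator, mem_ofPred_eq]
        grind
    _ = stopLoss P X s - stopLoss P X t :=
        integral_sub (integrable_max_sub_zero hX s) (integrable_max_sub_zero hX t)

lemma mrl_mul_measureReal [IsFiniteMeasure P] (hX : AEMeasurable X P) (t : ℝ) :
    mrl P X t * P.real {ω | t < X ω} = stopLoss P X t := by
  have htail : ∫ ω in {ω | t < X ω}, (X ω - t) ∂P = stopLoss P X t := by
    rw [← integral_indicator₀ (nullMeasurableSet_tail hX t), stopLoss]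
    congr with ω
    simp only [indicator, mem_ofPred_eq]
    grind
  rw [mrl, htail, ← measureReal_def]
  refine div_mul_cancel_of_imp fun hzero ↦ ?_
  rw [← htail]
  exact setIntegral_measure_zero _ ((measureReal_eq_zero_iff).mp hzero)

end StopLoss

section ConvexOrder

variable {Ω Ω' : Type*} [MeasurableSpace Ω] [MeasurableSpace Ω'] {P : Measure Ω} {Q : Measure Ω'}
  {U : Ω → ℝ} {V : Ω' → ℝ} {φ : ℝ → ℝ}

lemma lintegral_hinge_comp [IsProbabilityMeasure P] (hU : Integrable U P) (a s : ℝ) :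
    ∫⁻ ω, hinge a s (U ω) ∂P = ENNReal.ofReal
      (if a < s then stopLoss P U s else stopLoss P U s + s - ∫ ω, U ω ∂P) := by
  by_cases has : a < s
  · simp only [hinge, if_pos has, ofReal_stopLoss hU]
  · have hint : Integrable (fun ω ↦ max (s - U ω) 0) P := ((integrable_const s).sub hU).pos_part
    simp only [hinge, if_neg has]
    rw [← integral_max_const_sub_zero hU, ofReal_integral_eq_lintegral_ofReal hint
      (.of_forall fun _ ↦ le_max_right _ _)]
    simp [ENNReal.ofReal_max]

lemma lintegral_lintegral_hinge_comp [IsProbabilityMeasure P] (hU : Integrable U P)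
    (μ : Measure ℝ) [SFinite μ] (a : ℝ) :
    ∫⁻ ω, ∫⁻ s, hinge a s (U ω) ∂μ ∂P = ∫⁻ s, ENNReal.ofReal
      (if a < s then stopLoss P U s else stopLoss P U s + s - ∫ ω, U ω ∂P) ∂μ := by
  have hmeas : AEMeasurable (fun p : Ω × ℝ ↦ hinge a p.2 (U p.1)) (P.prod μ) :=
    measurable_hinge.comp_aemeasurable (hU.aemeasurable.comp_fst.prodMk measurable_snd.aemeasurable)
  rw [lintegral_lintegral_swap hmeas]
  exact lintegral_congr fun s ↦ lintegral_hinge_comp hU a s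

lemma lintegral_lintegral_hinge_le [IsProbabilityMeasure P] [IsProbabilityMeasure Q]
    (hU : Integrable U P) (hV : Integrable V Q) (hmean : ∫ ω, V ω ∂Q = ∫ ω, U ω ∂P)
    (hle : ∀ s, stopLoss P U s ≤ stopLoss Q V s) (μ : Measure ℝ) [SFinite μ] (a : ℝ) :
    ∫⁻ ω, ∫⁻ s, hinge a s (U ω) ∂μ ∂P ≤ ∫⁻ ω, ∫⁻ s, hinge a s (V ω) ∂μ ∂Q := by
  rw [lintegral_lintegral_hinge_comp hU, lintegral_lintegral_hinge_comp hV, hmean]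
  gcongr with s
  split_ifs <;> linarith [hle s]

lemma integrable_and_integral_le_of_lintegral_ofReal_le {f : Ω → ℝ} {g : Ω' → ℝ}
    (hf : AEStronglyMeasurable f P) (hf0 : 0 ≤ᵐ[P] f) (hg : Integrable g Q) (hg0 : 0 ≤ᵐ[Q] g)
    (hle : ∫⁻ ω, ENNReal.ofReal (f ω) ∂P ≤ ∫⁻ ω, ENNReal.ofReal (g ω) ∂Q) :
    Integrable f P ∧ ∫ ω, f ω ∂P ≤ ∫ ω, g ω ∂Q := by
  have hgtop := (lintegral_ofReal_ne_top_iff_integrable hg.1 hg0).mpr hg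
  refine ⟨(lintegral_ofReal_ne_top_iff_integrable hf hf0).mp (ne_top_of_le_ne_top hgtop hle), ?_⟩
  rw [integral_eq_lintegral_of_nonneg_ae hf0 hf, integral_eq_lintegral_of_nonneg_ae hg0 hg.1]
  exact ENNReal.toReal_mono hgtop hle

lemma integral_sub_const_sub_const_mul [IsProbabilityMeasure P] {f : Ω → ℝ} (hf : Integrable f P)
    (hU : Integrable U P) (b c : ℝ) :
    ∫ ω, (f ω - b - c * U ω) ∂P = ∫ ω, f ω ∂P - b - c * ∫ ω, U ω ∂P := by
  rw [integral_sub (by fun_prop) (by fun_prop), integral_sub hf (by fun_prop), integral_const_mul]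
  simp

theorem integrable_and_integral_convexOn_le_of_stopLoss_le
    [IsProbabilityMeasure P] [IsProbabilityMeasure Q]
    (hU : Integrable U P) (hV : Integrable V Q) (hmean : ∫ ω, V ω ∂Q = ∫ ω, U ω ∂P)
    (hle : ∀ s, stopLoss P U s ≤ stopLoss Q V s) (hφ : ConvexOn ℝ univ φ)
    (hφV : Integrable (fun ω ↦ φ (V ω)) Q) :
    Integrable (fun ω ↦ φ (U ω)) P ∧ ∫ ω, φ (U ω) ∂P ≤ ∫ ω, φ (V ω) ∂Q := by
  obtain ⟨c, μ, _, hμ⟩ := convexOn_exists_lintegral_hinge_eq hφ 0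
  have hcont := convexOn_continuous hφ
  simp only [sub_zero] at hμ
  have hgap : Integrable (fun ω ↦ φ (U ω) - φ 0 - c * U ω) P ∧
      ∫ ω, (φ (U ω) - φ 0 - c * U ω) ∂P ≤ ∫ ω, (φ (V ω) - φ 0 - c * V ω) ∂Q := by
    refine integrable_and_integral_le_of_lintegral_ofReal_le ?_ (.of_forall fun ω ↦ (hμ _).1)
      ((hφV.sub (integrable_const _)).sub (hV.const_mul c)) (.of_forall fun ω ↦ (hμ _).1) ?_
    · exact (by fun_prop : Continuous fun x ↦ φ x - φ 0 - c * x).comp_aestronglyMeasurable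
        hU.aestronglyMeasurable
    · simp_rw [← (hμ _).2]
      exact lintegral_lintegral_hinge_le hU hV hmean hle μ 0
  have hφU : Integrable (fun ω ↦ φ (U ω)) P :=
    ((hgap.1.add (hU.const_mul c)).add (integrable_const (φ 0))).congr
      (.of_forall fun ω ↦ by simp)
  refine ⟨hφU, ?_⟩
  have hle' := hgap.2
  rw [integral_sub_const_sub_const_mul hφU hU, integral_sub_const_sub_const_mul hφV hV,
    hmean] at hle'
  linarith

end ConvexOrder

lemma le_mul_exp_of_sub_le {f : ℝ → ℝ} {a b K : ℝ} (hf : ContinuousOn f (Icc a b)) (hab : a ≤ b)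
    (hdecay : ∀ s ∈ Icc a b, ∀ t ∈ Icc a b, s ≤ t → f t - f s ≤ (t - s) * (K * f t)) :
    f b ≤ f a * Real.exp (K * (b - a)) := by
  rw [← gronwallBound_ε0]
  refine le_gronwallBound_of_liminf_deriv_right_le (f' := fun t ↦ K * f t) hf ?_ le_rfl
    (fun _ _ ↦ (add_zero _).ge) b ⟨hab, le_rfl⟩
  intro s hs c hc
  have hright : Icc a b ∈ 𝓝[>] s := mem_of_superset (Ioo_mem_nhdsGT hs.2)
    fun t ht ↦ ⟨hs.1.trans ht.1.le, ht.2.le⟩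
  have hlim : Tendsto (fun t ↦ K * f t) (𝓝[>] s) (𝓝 (K * f s)) :=
    ((hf s ⟨hs.1, hs.2.le⟩).mono_left (nhdsWithin_le_of_mem hright)).const_mul K
  refine Eventually.frequently ?_
  filter_upwards [hlim.eventually_lt_const hc, hright, self_mem_nhdsWithin] with t htc ht hst
  refine lt_of_le_of_lt ?_ htc
  rw [inv_mul_le_iff₀ (sub_pos.mpr hst)]
  exact hdecay s ⟨hs.1, hs.2.le⟩ t ht (le_of_lt hst)

section NBUE

variable {Ω : Type*} [MeasurableSpace Ω] {P : Measure Ω} {X : Ω → ℝ} {r : ℝ}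

/-- New better than used in expectation (NBUE): at no age does the mean residual life exceed the
mean. This is the consequence of the DMRL property that bounds the stop-loss transform. -/
def IsNBUE (P : Measure Ω) (X : Ω → ℝ) : Prop :=
  ∀ t, 0 ≤ t → 0 < P {ω | t < X ω} → mrl P X t ≤ ∫ ω, X ω ∂P

lemma mrl_zero [IsProbabilityMeasure P] (hX : AEMeasurable X P) (hpos : ∀ᵐ ω ∂P, 0 < X ω) :
    mrl P X 0 = ∫ ω, X ω ∂P := by
  calc mrl P X 0 = mrl P X 0 * P.real {ω | 0 < X ω} := by
        rw [measureReal_def, (prob_compl_eq_zero_iff₀ (nullMeasurableSet_tail hX 0)).mp hpos]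
        simp
    _ = stopLoss P X 0 := mrl_mul_measureReal hX 0
    _ = ∫ ω, X ω ∂P := integral_congr_ae (hpos.mono fun ω h ↦ by simp [h.le])

namespace IsNBUE

lemma stopLoss_le_integral_mul [IsFiniteMeasure P] (h : IsNBUE P X) (hX : AEMeasurable X P)
    {t : ℝ} (ht : 0 ≤ t) :
    stopLoss P X t ≤ (∫ ω, X ω ∂P) * P.real {ω | t < X ω} := by
  rw [← mrl_mul_measureReal hX t]
  rcases eq_zero_or_pos (P {ω | t < X ω}) with hzero | hpos
  · simp [measureReal_def, hzero]
  · gcongr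
    exact h t ht hpos

lemma stopLoss_le_exp [IsProbabilityMeasure P] (h : IsNBUE P X) (hX : Integrable X P)
    (hr : 0 < r) (hmean : ∫ ω, X ω ∂P = r⁻¹) {t : ℝ} (ht : 0 ≤ t) :
    stopLoss P X t ≤ r⁻¹ * Real.exp (-(r * t)) := by
  have htail {u : ℝ} (hu : 0 ≤ u) : r * stopLoss P X u ≤ P.real {ω | u < X ω} := by
    rw [← le_inv_mul_iff₀ hr, ← hmean]
    exact h.stopLoss_le_integral_mul hX.aemeasurable hu
  have hinit : stopLoss P X 0 ≤ r⁻¹ := by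
    rw [← one_div, le_div_iff₀' hr]
    exact (htail le_rfl).trans measureReal_le_one
  calc stopLoss P X t ≤ stopLoss P X 0 * Real.exp (-r * (t - 0)) := by
        refine le_mul_exp_of_sub_le (continuous_stopLoss hX).continuousOn ht ?_
        intro u _ v hv huv
        have hdecrement := sub_mul_measureReal_le_stopLoss_sub hX huv
        have htail_mul := mul_le_mul_of_nonneg_left (htail hv.1) (sub_nonneg.mpr huv)
        linarith
    _ ≤ r⁻¹ * Real.exp (-(r * t)) := by
        rw [sub_zero, neg_mul]
        gcongr

lemma stopLoss_le_inv_sub [IsProbabilityMeasure P] (h : IsNBUE P X) (hX : Integrable X P)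
    (hr : 0 < r) (hmean : ∫ ω, X ω ∂P = r⁻¹) {t : ℝ} (ht : t ≤ 0) :
    stopLoss P X t ≤ r⁻¹ - t := by
  have hzero : stopLoss P X 0 ≤ r⁻¹ := by simpa using h.stopLoss_le_exp hX hr hmean le_rfl
  have hshift := stopLoss_le_add hX t 0
  rw [sub_zero, abs_of_nonpos ht] at hshift
  linarith

end IsNBUE

end NBUE

section Exponential

variable {Ω : Type*} [MeasurableSpace Ω] {P : Measure Ω} {X : Ω → ℝ} {r : ℝ}

lemma lintegral_ofReal_sub_eq_lintegral_tail (hX : AEMeasurable X P) (a : ℝ) :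
    ∫⁻ ω, ENNReal.ofReal (X ω - a) ∂P = ∫⁻ t in Ioi a, P {ω | t < X ω} := by
  calc ∫⁻ ω, ENNReal.ofReal (X ω - a) ∂P
      = ∫⁻ ω, ENNReal.ofReal (max (X ω - a) 0) ∂P := by simp [ENNReal.ofReal_max]
    _ = ∫⁻ t in Ioi 0, P {ω | t < max (X ω - a) 0} :=
        lintegral_eq_lintegral_meas_lt P (.of_forall fun _ ↦ le_max_right _ _) (by fun_prop)
    _ = ∫⁻ t in Ioi 0, P {ω | t + a < X ω} := by
        refine setLIntegral_congr_fun measurableSet_Ioi fun t (ht : 0 < t) ↦ ?_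
        simp [lt_sub_iff_add_lt, ht.not_gt]
    _ = ∫⁻ t in Ioi a, P {ω | t < X ω} := by
        simpa using (measurePreserving_add_right volume a).setLIntegral_comp_preimage_emb
          (measurableEmbedding_addRight a) (fun t ↦ P {ω | t < X ω}) (Ioi a)

lemma expMeasure_Ioi (hr : 0 < r) {t : ℝ} (ht : 0 ≤ t) :
    expMeasure r (Ioi t) = ENNReal.ofReal (Real.exp (-(r * t))) := by
  have := isProbabilityMeasure_expMeasure hr
  rw [← compl_Iic, ← ofReal_measureReal, probReal_compl_eq_one_sub measurableSet_Iic,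
    ← cdf_eq_real, cdf_expMeasure_eq hr, if_pos ht, sub_sub_cancel]

lemma lintegral_exp_neg_mul_Ioi (hr : 0 < r) (a : ℝ) :
    ∫⁻ t in Ioi a, ENNReal.ofReal (Real.exp (-(r * t))) =
      ENNReal.ofReal (r⁻¹ * Real.exp (-(r * a))) := by
  have hint := integrableOn_exp_mul_Ioi (neg_lt_zero.mpr hr) a
  have hval := integral_exp_mul_Ioi (neg_lt_zero.mpr hr) a
  simp only [neg_mul] at hint hval
  rw [← ofReal_integral_eq_lintegral_ofReal hint (.of_forall fun _ ↦ (Real.exp_pos _).le), hval,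
    neg_div_neg_eq, div_eq_inv_mul]

lemma lintegral_ofReal_sub_of_hasLaw_expMeasure (hX : HasLaw X (expMeasure r) P) (hr : 0 < r)
    {a : ℝ} (ha : 0 ≤ a) :
    ∫⁻ ω, ENNReal.ofReal (X ω - a) ∂P = ENNReal.ofReal (r⁻¹ * Real.exp (-(r * a))) := by
  rw [lintegral_ofReal_sub_eq_lintegral_tail hX.aemeasurable, ← lintegral_exp_neg_mul_Ioi hr]
  refine setLIntegral_congr_fun measurableSet_Ioi fun t (ht : a < t) ↦ ?_
  exact (hX.measure_eq measurableSet_Ioi).trans (expMeasure_Ioi hr (ha.trans ht.le))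

lemma ae_pos_of_hasLaw_expMeasure (hX : HasLaw X (expMeasure r) P) (hr : 0 < r) :
    ∀ᵐ ω ∂P, 0 < X ω := by
  have := isProbabilityMeasure_expMeasure hr
  rw [hX.ae_iff (p := fun x ↦ 0 < x) (by fun_prop)]
  refine (prob_compl_eq_zero_iff measurableSet_Ioi).mpr ?_
  simp [expMeasure_Ioi hr le_rfl]

lemma integrable_of_hasLaw_expMeasure (hX : HasLaw X (expMeasure r) P) (hr : 0 < r) :
    Integrable X P := by
  rw [← lintegral_ofReal_ne_top_iff_integrable hX.aemeasurable.aestronglyMeasurable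
    ((ae_pos_of_hasLaw_expMeasure hX hr).mono fun _ h ↦ h.le)]
  simpa only [sub_zero] using
    (lintegral_ofReal_sub_of_hasLaw_expMeasure hX hr le_rfl).trans_ne ENNReal.ofReal_ne_top

lemma stopLoss_of_hasLaw_expMeasure (hX : HasLaw X (expMeasure r) P) (hr : 0 < r)
    {a : ℝ} (ha : 0 ≤ a) :
    stopLoss P X a = r⁻¹ * Real.exp (-(r * a)) := by
  have := isProbabilityMeasure_expMeasure hr
  have := hX.isProbabilityMeasure
  have hnonneg : 0 ≤ stopLoss P X a := integral_nonneg fun _ ↦ le_max_right _ _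
  rw [← ENNReal.ofReal_eq_ofReal_iff hnonneg (by positivity),
    ofReal_stopLoss (integrable_of_hasLaw_expMeasure hX hr),
    lintegral_ofReal_sub_of_hasLaw_expMeasure hX hr ha]

lemma integral_of_hasLaw_expMeasure (hX : HasLaw X (expMeasure r) P) (hr : 0 < r) :
    ∫ ω, X ω ∂P = r⁻¹ := by
  calc ∫ ω, X ω ∂P = stopLoss P X 0 :=
        integral_congr_ae ((ae_pos_of_hasLaw_expMeasure hX hr).mono fun ω h ↦ by simp [h.le])
    _ = r⁻¹ := by simp [stopLoss_of_hasLaw_expMeasure hX hr le_rfl]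

end Exponential

theorem DMRL_le_cx_exponential_general
    {Ω : Type*} [MeasurableSpace Ω] (P : Measure Ω) [IsProbabilityMeasure P]
    {Ω' : Type*} [MeasurableSpace Ω'] (Q : Measure Ω')
    (Y : Ω → ℝ) (Ye : Ω' → ℝ)
    (hYint : Integrable Y P) (hNBUE : IsNBUE P Y)
    (r : ℝ) (hr : 0 < r) (hYeexp : HasLaw Ye (expMeasure r) Q)
    (hYemean : ∫ ω, Ye ω ∂Q = ∫ ω, Y ω ∂P)
    (φ : ℝ → ℝ) (hφ : ConvexOn ℝ univ φ) (hφYe : Integrable (fun ω ↦ φ (Ye ω)) Q) :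
    Integrable (fun ω ↦ φ (Y ω)) P ∧ ∫ ω, φ (Y ω) ∂P ≤ ∫ ω, φ (Ye ω) ∂Q := by
  have := isProbabilityMeasure_expMeasure hr
  have := hYeexp.isProbabilityMeasure
  have hYeint := integrable_of_hasLaw_expMeasure hYeexp hr
  have hYemean_eq := integral_of_hasLaw_expMeasure hYeexp hr
  have hYmean_eq : ∫ ω, Y ω ∂P = r⁻¹ := hYemean.symm.trans hYemean_eq
  refine integrable_and_integral_convexOn_le_of_stopLoss_le hYint hYeint hYemean ?_ hφ hφYe
  intro t
  rcases le_total 0 t with ht | ht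
  · rw [stopLoss_of_hasLaw_expMeasure hYeexp hr ht]
    exact hNBUE.stopLoss_le_exp hYint hr hYmean_eq ht
  · calc stopLoss P Y t ≤ r⁻¹ - t := hNBUE.stopLoss_le_inv_sub hYint hr hYmean_eq ht
      _ = ∫ ω, Ye ω ∂Q - t := by rw [hYemean_eq]
      _ ≤ stopLoss Q Ye t := integral_sub_le_stopLoss hYeint t

/-- **A DMRL random variable is smaller in the convex order than the exponential random
variable with the same mean:** if `Y` is positive, integrable, with decreasing mean residual
life, and `Ye` is exponentially distributed with `E[Ye] = E[Y]`, then `E[φ(Y)] ≤ E[φ(Ye)]`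
for every convex `φ : ℝ → ℝ` with both expectations finite. -/
theorem DMRL_le_cx_exponential
    {Ω : Type*} [MeasurableSpace Ω] (P : Measure Ω) [IsProbabilityMeasure P]
    {Ω' : Type*} [MeasurableSpace Ω'] (Q : Measure Ω') [IsProbabilityMeasure Q]
    (Y : Ω → ℝ) (Ye : Ω' → ℝ)
    (hYmeas : Measurable Y) (hYemeas : Measurable Ye)
    (hYpos : ∀ᵐ ω ∂P, 0 < Y ω)
    (hYint : Integrable Y P)
    (hDMRL : ∀ s t : ℝ, 0 ≤ s → s ≤ t → 0 < P {ω | t < Y ω} →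
      mrl P Y t ≤ mrl P Y s)
    (r : ℝ) (hr : 0 < r)
    (hYeexp : Q.map Ye = expMeasure r)
    (hYemean : ∫ ω, Ye ω ∂Q = ∫ ω, Y ω ∂P)
    (φ : ℝ → ℝ) (hφ : ConvexOn ℝ Set.univ φ)
    (hφY : Integrable (fun ω => φ (Y ω)) P)
    (hφYe : Integrable (fun ω => φ (Ye ω)) Q) :
    ∫ ω, φ (Y ω) ∂P ≤ ∫ ω, φ (Ye ω) ∂Q := by
  have hNBUE : IsNBUE P Y := fun t ht hpos ↦
    (hDMRL 0 t le_rfl ht hpos).trans_eq (mrl_zero hYint.aemeasurable hYpos)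
  exact (DMRL_le_cx_exponential_general P Q Y Ye hYint hNBUE r hr ⟨hYemeas.aemeasurable, hYeexp⟩
    hYemean φ hφ hφYe).2
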